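/- There exists c₀>0 such that, on (0,c₀), the tangency-pair functions are monotone: c ↦ ŷ₁(c) is strictly decreasing and c ↦ ŷ₂(c) is strictly increasing; moreover G(c)=Ψ⁻¹(ŷ₂(c)) is differentiable with G'(c) > 1 for all c ∈ (0,c₀). Equivalently, the left boundary F(c)=Ψ⁻¹(ŷ₁(c)) is strictly decreasing and the right boundary G(c) is strictly increasing on (0,c₀). -/

import Mathlib

/-- The double-tangency system. -/
def TangencySystem (Hl Hrc : ℝ → ℝ) (y₁ y₂ : ℝ) : Prop :=
  deriv Hl y₁ = deriv Hrc y₂ ∧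
  Hl y₁ - deriv Hl y₁ * y₁ = Hrc y₂ - deriv Hrc y₂ * y₂

/-!
In the state coordinate `x = log y / (2 * k)`, `k = √(2 * α)`, the lines in `y` are the solutions of
`u'' = k ^ 2 * u`, so a double tangency between states `x₁` and `x₂ = x₁ + t` says that the flow of
this equation over time `t` carries the Cauchy data of `h_l` at `x₁` to those of `h_r` at `x₂`.
At `c = 0` both payoffs agree and every `x₁` with `t = 0` is a solution. This degeneracy is removed
by writing `c = t * γ (t, x₁)` and dividing the remaining equation by `t`: the resulting system is
analytic and at `t = 0` is solved by `x₁ = 1 / (2 * δ)`, where it is nondegenerate. With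
`g = γ (0, 1 / (2 * δ))`, the inverse function theorem gives a `C¹` curve `c ↦ (x₁, x₂)` with
derivatives `(g - 1) / (2 * g)` and `(g + 1) / (2 * g)` at `c = 0`, and `0 < g < 1` makes the first
negative and the second larger than `1`. Uniqueness of the tangency pair identifies it with this
curve for small `c > 0`.
-/

section TangencyPair

open Real Filter Topology Set

section Calculus

variable {𝕜 E : Type*} [NontriviallyNormedField 𝕜] [NormedAddCommGroup E] [NormedSpace 𝕜 E]

lemma analyticAt_dslope_self {f : 𝕜 → E} {a : 𝕜} (hf : AnalyticAt 𝕜 f a) :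
    AnalyticAt 𝕜 (dslope f a) a :=
  let ⟨_, hp⟩ := hf
  hp.has_fpower_series_dslope_fslope.analyticAt

lemma hasDerivAt_dslope_self [CompleteSpace 𝕜] [CharZero 𝕜] {f : 𝕜 → 𝕜} {a : 𝕜}
    (hf : AnalyticAt 𝕜 f a) :
    HasDerivAt (dslope f a) (iteratedDeriv 2 f a / 2) a := by
  refine (analyticAt_dslope_self hf).differentiableAt.hasDerivAt.congr_deriv ?_
  rw [hf.hasFPowerSeriesAt.has_fpower_series_dslope_fslope.deriv]
  change (FormalMultilinearSeries.fslope _).coeff 1 = _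
  rw [FormalMultilinearSeries.coeff_fslope, FormalMultilinearSeries.coeff_ofScalars,
    Nat.factorial_two, Nat.cast_two]

lemma exists_contDiffAt_curve_of_equiv {𝕂 E F : Type*} [RCLike 𝕂] [NormedAddCommGroup E]
    [NormedSpace 𝕂 E] [CompleteSpace E] [NormedAddCommGroup F] [NormedSpace 𝕂 F]
    {n : WithTop ℕ∞} (hn : n ≠ 0) {f : E → F} {f' : E ≃L[𝕂] F} {p : E}
    (hf : ContDiffAt 𝕂 n f p) (hf' : HasFDerivAt f (f' : E →L[𝕂] F) p) (v : E) :
    ∃ φ : 𝕂 → E, ContDiffAt 𝕂 n φ 0 ∧ φ 0 = p ∧ HasDerivAt φ v 0 ∧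
      ∀ᶠ s in 𝓝 0, f (φ s) = f p + s • f' v := by
  have hstrict := hf.hasStrictFDerivAt' hf' hn
  set g := hstrict.localInverse f f' p with hg
  set line : 𝕂 → F := fun s => f p + s • f' v with hline
  have line_zero : line 0 = f p := by simp [hline]
  have line_contDiff : ContDiffAt 𝕂 n line 0 :=
    contDiffAt_const.add (contDiffAt_id.smul contDiffAt_const)
  have line_deriv : HasDerivAt line (f' v) 0 := by
    simpa only [one_smul, id] using
      ((hasDerivAt_id (0 : 𝕂)).smul_const (f' v)).const_add (f p)
  have g_contDiff : ContDiffAt 𝕂 n g (line 0) := line_zero ▸ hf.to_localInverse hf' hn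
  have g_deriv : HasFDerivAt g (f'.symm : F →L[𝕂] E) (line 0) :=
    line_zero ▸ hstrict.to_localInverse.hasFDerivAt
  refine ⟨g ∘ line, g_contDiff.comp 0 line_contDiff, ?_, ?_, ?_⟩
  · rw [Function.comp_apply, line_zero, hg, hstrict.localInverse_apply_image]
  · simpa using g_deriv.comp_hasDerivAt 0 line_deriv
  · exact line_contDiff.continuousAt.eventually
      (line_zero ▸ hstrict.eventually_right_inverse)

lemma eventually_differentiableAt_of_contDiffAt_one {f : 𝕜 → E} {x : 𝕜}
    (hf : ContDiffAt 𝕜 1 f x) : ∀ᶠ z in 𝓝 x, DifferentiableAt 𝕜 f z :=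
  (hf.eventually (by simp)).mono fun _ hz => hz.differentiableAt one_ne_zero

lemma continuousAt_deriv_of_contDiffAt_one {f : 𝕜 → E} {x : 𝕜}
    (hf : ContDiffAt 𝕜 1 f x) : ContinuousAt (deriv f) x :=
  (hf.derivWithin (m := 0) (by norm_num)).continuousAt

lemma eventually_lt_of_lt_deriv {f : ℝ → ℝ} {f' m x : ℝ} (hf : HasDerivAt f f' x) (hm : m < f') :
    ∀ᶠ t in 𝓝[>] 0, f x + m * t < f (x + t) := by
  filter_upwards [hf.tendsto_slope_zero_right.eventually_const_lt hm, self_mem_nhdsWithin]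
    with t hslope ht
  rw [smul_eq_mul, lt_inv_mul_iff₀ ht] at hslope
  linarith

lemma eventually_lt_of_deriv_lt {f : ℝ → ℝ} {f' m x : ℝ} (hf : HasDerivAt f f' x) (hm : f' < m) :
    ∀ᶠ t in 𝓝[>] 0, f (x + t) < f x + m * t := by
  filter_upwards [eventually_lt_of_lt_deriv hf.neg (neg_lt_neg hm)] with t ht
  simp only [Pi.neg_apply] at ht
  linarith

lemma strictAntiOn_of_differentiableAt_of_deriv_neg {f : ℝ → ℝ} {D : Set ℝ} (hD : Convex ℝ D)
    (hf : ∀ x ∈ D, DifferentiableAt ℝ f x) (hf' : ∀ x ∈ D, deriv f x < 0) : StrictAntiOn f D :=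
  strictAntiOn_of_deriv_neg hD (fun x hx => (hf x hx).continuousAt.continuousWithinAt)
    fun x hx => hf' x (interior_subset hx)

lemma strictMonoOn_of_differentiableAt_of_deriv_pos {f : ℝ → ℝ} {D : Set ℝ} (hD : Convex ℝ D)
    (hf : ∀ x ∈ D, DifferentiableAt ℝ f x) (hf' : ∀ x ∈ D, 0 < deriv f x) : StrictMonoOn f D :=
  strictMonoOn_of_deriv_pos hD (fun x hx => (hf x hx).continuousAt.continuousWithinAt)
    fun x hx => hf' x (interior_subset hx)

lemma neg_of_unique_quadratic_root {A B C M x : ℝ} (hA : 0 < A) (hC : 0 < C) (hx : x < M)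
    (hroot : C + B * x - A * x ^ 2 = 0)
    (hunique : ∀ z < M, C + B * z - A * z ^ 2 = 0 → z = x) : x < 0 := by
  obtain ⟨z, hz, -, hprod⟩ : ∃ z, z * z - B / A * z + -C / A = 0 ∧ x + z = B / A ∧
      x * z = -C / A := by
    apply vieta_formula_quadratic
    field_simp
    linear_combination -hroot
  have hz_root : C + B * z - A * z ^ 2 = 0 := by
    field_simp at hz
    linear_combination -hz
  have hxz : x * z < 0 := hprod ▸ div_neg_of_neg_of_pos (neg_neg_of_pos hC) hA
  by_contra! hx_nonneg
  have hz_neg : z < 0 := neg_of_mul_neg_right hxz hx_nonneg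
  exact absurd (hunique z (by linarith) hz_root) (by linarith)

end Calculus

section Hyperbolic

lemma mul_dslope_sinh_zero (u : ℝ) : u * dslope sinh 0 u = sinh u := by
  simpa only [sub_zero, smul_eq_mul, sinh_zero] using sub_smul_dslope sinh 0 u

lemma one_add_mul_dslope_cosh_zero (u : ℝ) : 1 + u * dslope cosh 0 u = cosh u := by
  have h := sub_smul_dslope cosh 0 u
  rw [sub_zero, smul_eq_mul, cosh_zero] at h
  linarith

lemma dslope_sinh_zero_zero : dslope sinh 0 0 = 1 := by
  rw [dslope_same, Real.deriv_sinh, cosh_zero]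

lemma dslope_cosh_zero_zero : dslope cosh 0 0 = 0 := by
  rw [dslope_same, Real.deriv_cosh, sinh_zero]

lemma hasDerivAt_dslope_sinh_zero : HasDerivAt (dslope sinh 0) 0 0 := by
  simpa using hasDerivAt_dslope_self (analyticAt_sinh (x := 0))

lemma hasDerivAt_dslope_cosh_zero : HasDerivAt (dslope cosh 0) (1 / 2) 0 := by
  simpa using hasDerivAt_dslope_self (analyticAt_cosh (x := 0))

end Hyperbolic

section Transform

/-- The payoff `h`, a function of the state `x`, in the coordinate `y = exp (2 * k * x)`, the ratio
of the fundamental solutions `exp (± k * x)` of `u'' = k ^ 2 * u`, and divided by the decreasing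
one. Meaningful only for `0 < y`. -/
noncomputable def payoffTransform (k : ℝ) (h : ℝ → ℝ) (y : ℝ) : ℝ :=
  √y * h (log y / (2 * k))

variable {k : ℝ} {h hl hr H : ℝ → ℝ}

lemma log_exp_two_mul_div (hk : k ≠ 0) (x : ℝ) : log (exp (2 * k * x)) / (2 * k) = x := by
  rw [log_exp]
  field_simp

lemma sqrt_exp_two_mul (k x : ℝ) : √(exp (2 * k * x)) = exp (k * x) := by
  rw [← exp_half]
  ring_nf

lemma payoffTransform_exp (hk : k ≠ 0) (h : ℝ → ℝ) (x : ℝ) :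
    payoffTransform k h (exp (2 * k * x)) = exp (k * x) * h x := by
  rw [payoffTransform, log_exp_two_mul_div hk, sqrt_exp_two_mul]

lemma hasDerivAt_payoffTransform (hk : k ≠ 0) {x h' : ℝ} (hh : HasDerivAt h h' x) :
    HasDerivAt (payoffTransform k h) (exp (-(k * x)) * (k * h x + h') / (2 * k))
      (exp (2 * k * x)) := by
  have hy := (exp_pos (2 * k * x)).ne'
  have hcoord := (Real.hasDerivAt_log hy).div_const (2 * k)
  rw [← log_exp_two_mul_div hk x] at hh
  refine ((Real.hasDerivAt_sqrt hy).mul (hh.comp (exp (2 * k * x)) hcoord)).congr_deriv ?_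
  rw [Function.comp_apply, log_exp_two_mul_div hk, sqrt_exp_two_mul, exp_neg,
    show 2 * k * x = k * x + k * x by ring, exp_add]
  field_simp

lemma payoffTransform_sub_deriv_mul (hk : k ≠ 0) {x h' : ℝ} (hh : HasDerivAt h h' x) :
    payoffTransform k h (exp (2 * k * x)) -
        deriv (payoffTransform k h) (exp (2 * k * x)) * exp (2 * k * x) =
      exp (k * x) * (k * h x - h') / (2 * k) := by
  rw [payoffTransform_exp hk, (hasDerivAt_payoffTransform hk hh).deriv, exp_neg,
    show 2 * k * x = k * x + k * x by ring, exp_add]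
  field_simp
  ring

/-- A line in the coordinate `y` is a solution of `u'' = k ^ 2 * u` in the state, so a common
tangent transports Cauchy data by the flow of that equation. -/
lemma tangencySystem_payoffTransform_iff (hk : k ≠ 0) {x t hl' hr' : ℝ}
    (hhl : HasDerivAt hl hl' x) (hhr : HasDerivAt hr hr' (x + t)) :
    TangencySystem (payoffTransform k hl) (payoffTransform k hr)
        (exp (2 * k * x)) (exp (2 * k * (x + t))) ↔
      hr' = k * hl x * sinh (k * t) + hl' * cosh (k * t) ∧
        k * hr (x + t) = k * hl x * cosh (k * t) + hl' * sinh (k * t) := by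
  have hslope : exp (-(k * x)) * (k * hl x + hl') / (2 * k) =
      exp (-(k * (x + t))) * (k * hr (x + t) + hr') / (2 * k) ↔
      exp (k * t) * (k * hl x + hl') = k * hr (x + t) + hr' := by
    rw [div_left_inj' (by simpa using hk), mul_add k, neg_add, exp_add, mul_assoc,
      mul_right_inj' (exp_ne_zero _), exp_neg (k * t), eq_inv_mul_iff_mul_eq₀ (exp_ne_zero _)]
  have hintercept : exp (k * x) * (k * hl x - hl') / (2 * k) =
      exp (k * (x + t)) * (k * hr (x + t) - hr') / (2 * k) ↔
      exp (-(k * t)) * (k * hl x - hl') = k * hr (x + t) - hr' := by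
    rw [div_left_inj' (by simpa using hk), mul_add k, exp_add, mul_assoc,
      mul_right_inj' (exp_ne_zero _), exp_neg, inv_mul_eq_iff_eq_mul₀ (exp_ne_zero _)]
  rw [TangencySystem, payoffTransform_sub_deriv_mul hk hhl, payoffTransform_sub_deriv_mul hk hhr,
    (hasDerivAt_payoffTransform hk hhl).deriv, (hasDerivAt_payoffTransform hk hhr).deriv,
    hslope, hintercept, ← cosh_add_sinh, ← cosh_sub_sinh]
  constructor
  · rintro ⟨hsum, hdiff⟩
    exact ⟨by linear_combination (hdiff - hsum) / 2, by linear_combination -(hsum + hdiff) / 2⟩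
  · rintro ⟨hderiv, hvalue⟩
    exact ⟨by linear_combination -hvalue - hderiv, by linear_combination hderiv - hvalue⟩

lemma eventuallyEq_payoffTransform (hk : k ≠ 0) {z : ℝ}
    (hH : ∀ y, 0 < y → H y = payoffTransform k hr y) (heq : hr =ᶠ[𝓝 z] hl) :
    H =ᶠ[𝓝 (exp (2 * k * z))] payoffTransform k hl := by
  have hcoord : Tendsto (fun y => log y / (2 * k)) (𝓝 (exp (2 * k * z))) (𝓝 z) := by
    simpa only [log_exp_two_mul_div hk] using
      ((Real.continuousAt_log (exp_ne_zero (2 * k * z))).div_const (2 * k)).tendsto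
  filter_upwards [lt_mem_nhds (exp_pos _), hcoord.eventually heq] with y hy hstate
  rw [hH y hy, payoffTransform, payoffTransform, hstate]

lemma TangencySystem.of_payoffTransform (hk : k ≠ 0) {hr' Hl Hr : ℝ → ℝ} {x z : ℝ}
    (hHl : ∀ y, 0 < y → Hl y = payoffTransform k hl y)
    (hHr : ∀ y, 0 < y → Hr y = payoffTransform k hr y) (heq : hr =ᶠ[𝓝 z] hr')
    (h : TangencySystem (payoffTransform k hl) (payoffTransform k hr')
      (exp (2 * k * x)) (exp (2 * k * z))) :
    TangencySystem Hl Hr (exp (2 * k * x)) (exp (2 * k * z)) := by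
  have hleft := eventuallyEq_payoffTransform hk (z := x) hHl EventuallyEq.rfl
  have hright := eventuallyEq_payoffTransform hk hHr heq
  unfold TangencySystem
  rwa [hleft.deriv_eq, hright.deriv_eq, hleft.eq_of_nhds, hright.eq_of_nhds]

end Transform

section Profiles

/-- The quadratic payoff on the left of the tangency: `H_l` is its `payoffTransform` for
`a = δ - λ / α` and `b = λ / α ^ 2`. -/
def leftPayoff (a b x : ℝ) : ℝ := a * x ^ 2 - b

/-- The payoff `h_{r1}(·; c)`, with the same coefficients as `leftPayoff`. -/
def rightPayoff (a b δ c x : ℝ) : ℝ := a * x ^ 2 - b + c + δ * c * (c - 2 * x)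

variable {a b δ k : ℝ}

lemma hasDerivAt_leftPayoff (x : ℝ) : HasDerivAt (leftPayoff a b) (2 * a * x) x := by
  refine (((hasDerivAt_pow 2 x).const_mul a).sub_const b).congr_deriv ?_
  rw [Nat.cast_two, pow_one]
  ring

lemma hasDerivAt_rightPayoff (c x : ℝ) :
    HasDerivAt (rightPayoff a b δ c) (2 * a * x - 2 * δ * c) x := by
  refine (((hasDerivAt_leftPayoff x).add_const c).add
    ((((hasDerivAt_id x).const_mul 2).const_sub c).const_mul (δ * c))).congr_deriv ?_
  ring

/-- The parameter `c` divided by the gap `t = x₂ - x₁` between the tangency points, as a function of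
`(t, x₁)`: solve the derivative equation of `tangencySystem_payoffTransform_iff` for `c`; `dslope`
extends the quotient analytically to `t = 0`. -/
noncomputable def gapQuotient (a b δ k : ℝ) (p : ℝ × ℝ) : ℝ :=
  (2 * a - k ^ 2 * leftPayoff a b p.2 * dslope sinh 0 (k * p.1)
    - 2 * a * k * p.2 * dslope cosh 0 (k * p.1)) / (2 * δ)

/-- The value equation of `tangencySystem_payoffTransform_iff` at `c = t * gapQuotient (t, x₁)`,
divided by `k * t`. -/
noncomputable def contactDefect (a b δ k : ℝ) (p : ℝ × ℝ) : ℝ :=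
  a * p.1 + 2 * a * p.2 * (1 - dslope sinh 0 (k * p.1))
    - k * leftPayoff a b p.2 * dslope cosh 0 (k * p.1)
    + gapQuotient a b δ k p *
      (1 + δ * (p.1 * gapQuotient a b δ k p - 2 * p.2 - 2 * p.1))

lemma tangencySystem_of_contactDefect_eq_zero (hδ : δ ≠ 0) (hk : k ≠ 0) {c t x : ℝ}
    (hc : t * gapQuotient a b δ k (t, x) = c) (hdefect : contactDefect a b δ k (t, x) = 0) :
    TangencySystem (payoffTransform k (leftPayoff a b))
      (payoffTransform k (rightPayoff a b δ c)) (exp (2 * k * x)) (exp (2 * k * (x + t))) := by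
  rw [tangencySystem_payoffTransform_iff hk (hasDerivAt_leftPayoff x)
    (hasDerivAt_rightPayoff c (x + t)), ← mul_dslope_sinh_zero, ← one_add_mul_dslope_cosh_zero]
  have hquot : 2 * δ * gapQuotient a b δ k (t, x) =
      2 * a - k ^ 2 * leftPayoff a b x * dslope sinh 0 (k * t)
        - 2 * a * k * x * dslope cosh 0 (k * t) :=
    mul_div_cancel₀ _ (by simpa using hδ)
  rw [contactDefect, hc] at hdefect
  constructor
  · linear_combination 2 * δ * hc - t * hquot
  · rw [rightPayoff]
    simp only [leftPayoff] at hdefect hquot ⊢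
    linear_combination k * t * hdefect - k * (1 + δ * (c - 2 * x - 2 * t)) * hc

lemma contDiffAt_dslope_zero_mul_fst {f : ℝ → ℝ} (hf : AnalyticAt ℝ f 0) (k x : ℝ)
    {n : WithTop ℕ∞} : ContDiffAt ℝ n (fun p : ℝ × ℝ => dslope f 0 (k * p.1)) (0, x) := by
  have hslope : ContDiffAt ℝ n (dslope f 0) (k * ((0, x) : ℝ × ℝ).1) := by
    simpa only [mul_zero] using (analyticAt_dslope_self hf).contDiffAt
  exact hslope.comp (0, x) (contDiffAt_const.mul contDiffAt_fst)

lemma contDiffAt_gapQuotient {n : WithTop ℕ∞} (x : ℝ) :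
    ContDiffAt ℝ n (gapQuotient a b δ k) (0, x) := by
  have hsinh := contDiffAt_dslope_zero_mul_fst (n := n) (analyticAt_sinh (x := 0)) k x
  have hcosh := contDiffAt_dslope_zero_mul_fst (n := n) (analyticAt_cosh (x := 0)) k x
  unfold gapQuotient leftPayoff
  fun_prop

lemma contDiffAt_contactDefect {n : WithTop ℕ∞} (x : ℝ) :
    ContDiffAt ℝ n (contactDefect a b δ k) (0, x) := by
  have hsinh := contDiffAt_dslope_zero_mul_fst (n := n) (analyticAt_sinh (x := 0)) k x
  have hcosh := contDiffAt_dslope_zero_mul_fst (n := n) (analyticAt_cosh (x := 0)) k x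
  have hquot := contDiffAt_gapQuotient (a := a) (b := b) (δ := δ) (k := k) (n := n) x
  unfold contactDefect leftPayoff
  fun_prop

lemma gapQuotient_zero (x : ℝ) :
    gapQuotient a b δ k (0, x) = (2 * a - k ^ 2 * leftPayoff a b x) / (2 * δ) := by
  simp only [gapQuotient, mul_zero, dslope_sinh_zero_zero, dslope_cosh_zero_zero, mul_one, sub_zero]

variable {x₀ : ℝ}

lemma contactDefect_zero (hx₀ : 2 * δ * x₀ = 1) : contactDefect a b δ k (0, x₀) = 0 := by
  simp only [contactDefect, mul_zero, dslope_sinh_zero_zero, dslope_cosh_zero_zero]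
  linear_combination -gapQuotient a b δ k (0, x₀) * hx₀

lemma hasFDerivAt_dslope_zero_mul_fst {f : ℝ → ℝ} {f' : ℝ} (hf : HasDerivAt (dslope f 0) f' 0)
    (k x : ℝ) :
    HasFDerivAt (fun p : ℝ × ℝ => dslope f 0 (k * p.1))
      ((f' * k) • ContinuousLinearMap.fst ℝ ℝ ℝ) (0, x) := by
  have hslope : HasDerivAt (dslope f 0) f' (k * ((0, x) : ℝ × ℝ).1) := by simpa using hf
  refine (hslope.comp_hasFDerivAt (0, x) (hasFDerivAt_fst.const_mul k)).congr_fderiv ?_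
  rw [smul_smul]

lemma hasFDerivAt_contactDefect (hδ : δ ≠ 0) (hx₀ : 2 * δ * x₀ = 1) {g : ℝ}
    (hg : gapQuotient a b δ k (0, x₀) = g) :
    HasFDerivAt (contactDefect a b δ k)
      ((δ * g * (g - 1)) • ContinuousLinearMap.fst ℝ ℝ ℝ
        - (2 * δ * g) • ContinuousLinearMap.snd ℝ ℝ ℝ) (0, x₀) := by
  have ht : HasFDerivAt Prod.fst (ContinuousLinearMap.fst ℝ ℝ ℝ) ((0, x₀) : ℝ × ℝ) :=
    hasFDerivAt_fst
  have hx : HasFDerivAt Prod.snd (ContinuousLinearMap.snd ℝ ℝ ℝ) ((0, x₀) : ℝ × ℝ) :=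
    hasFDerivAt_snd
  have hsinh := hasFDerivAt_dslope_zero_mul_fst hasDerivAt_dslope_sinh_zero k x₀
  have hcosh := hasFDerivAt_dslope_zero_mul_fst hasDerivAt_dslope_cosh_zero k x₀
  have hpayoff := (hasDerivAt_leftPayoff (a := a) (b := b) x₀).comp_hasFDerivAt (0, x₀) hx
  have hquot := ((contDiffAt_gapQuotient (a := a) (b := b) (δ := δ) (k := k) (n := 1)
    x₀).differentiableAt one_ne_zero).hasFDerivAt
  refine ((((ht.const_mul a).add ((hx.const_mul (2 * a)).mul (hsinh.const_sub 1))).sub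
    ((hpayoff.const_mul k).mul hcosh)).add (hquot.mul
      (((((ht.mul hquot).sub (hx.const_mul 2)).sub (ht.const_mul 2)).const_mul δ).const_add
        1))).congr_fderiv ?_
  have hg_eq : 2 * a - k ^ 2 * leftPayoff a b x₀ = g * (2 * δ) := by
    rw [← hg, gapQuotient_zero, div_mul_cancel₀ _ (by simpa using hδ)]
  refine ContinuousLinearMap.ext fun ⟨u, v⟩ => ?_
  simp only [Function.comp_apply, Pi.sub_apply, Pi.mul_apply, add_apply, sub_apply, neg_apply,
    smul_apply, ContinuousLinearMap.coe_fst', ContinuousLinearMap.coe_snd', smul_eq_mul, mul_zero,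
    zero_mul, dslope_sinh_zero_zero, dslope_cosh_zero_zero, hg]
  -- The unknown derivative of `gapQuotient` enters with the factor `1 - 2 * δ * x₀ = 0`.
  linear_combination u / 2 * hg_eq - fderiv ℝ (gapQuotient a b δ k) (0, x₀) (u, v) * hx₀

lemma exists_zero_curve_contactDefect (hδ : δ ≠ 0) (hx₀ : 2 * δ * x₀ = 1) {g : ℝ} (hg₀ : g ≠ 0)
    (hg : gapQuotient a b δ k (0, x₀) = g) :
    ∃ φ : ℝ → ℝ × ℝ, ContDiffAt ℝ 1 φ 0 ∧ φ 0 = (0, x₀) ∧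
      HasDerivAt φ (1 / g, (g - 1) / (2 * g)) 0 ∧
      ∀ᶠ c in 𝓝 0, (φ c).1 * gapQuotient a b δ k (φ c) = c ∧ contactDefect a b δ k (φ c) = 0 := by
  let e : (ℝ × ℝ) ≃L[ℝ] ℝ × ℝ :=
    (ContinuousLinearEquiv.unitsEquivAut ℝ (Units.mk0 g hg₀)).skewProd
      (ContinuousLinearEquiv.unitsEquivAut ℝ
        (Units.mk0 (-(2 * δ * g)) (neg_ne_zero.mpr (mul_ne_zero (mul_ne_zero two_ne_zero hδ) hg₀))))
      ((δ * g * (g - 1)) • ContinuousLinearMap.id ℝ ℝ)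
  have hquot := contDiffAt_gapQuotient (a := a) (b := b) (δ := δ) (k := k) (n := 1) x₀
  have hsystem : ContDiffAt ℝ 1
      (fun p => (p.1 * gapQuotient a b δ k p, contactDefect a b δ k p)) (0, x₀) :=
    (contDiffAt_fst.mul hquot).prodMk (contDiffAt_contactDefect _)
  have hsystem_deriv : HasFDerivAt
      (fun p => (p.1 * gapQuotient a b δ k p, contactDefect a b δ k p))
      (e : ℝ × ℝ →L[ℝ] ℝ × ℝ) (0, x₀) := by
    refine ((hasFDerivAt_fst.mul (hquot.differentiableAt one_ne_zero).hasFDerivAt).prodMk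
      (hasFDerivAt_contactDefect hδ hx₀ hg)).congr_fderiv ?_
    ext <;> simp [e, hg]
  obtain ⟨φ, hφ, hφ0, hφ', hsolves⟩ := exists_contDiffAt_curve_of_equiv one_ne_zero hsystem
    hsystem_deriv (1 / g, (g - 1) / (2 * g))
  have hdirection : e (1 / g, (g - 1) / (2 * g)) = (1, 0) := by
    simp only [one_div, ContinuousLinearEquiv.skewProd_apply,
      ContinuousLinearEquiv.unitsEquivAut_apply, Units.val_mk0, mul_neg, smul_apply,
      ContinuousLinearMap.id_apply, smul_eq_mul, Prod.mk.injEq, e]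
    constructor
    · field_simp
    · field_simp
      ring
  refine ⟨φ, hφ, hφ0, hφ', hsolves.mono fun c hc => ?_⟩
  rw [hdirection, contactDefect_zero hx₀] at hc
  simpa only [zero_mul, Prod.smul_mk, smul_eq_mul, mul_one, mul_zero, Prod.mk_add_mk, zero_add,
    Prod.mk.injEq] using hc

lemma exists_tangency_curve (hδ : δ ≠ 0) (hk : k ≠ 0) (hx₀ : 2 * δ * x₀ = 1)
    (hpos : 0 < gapQuotient a b δ k (0, x₀)) (hlt : gapQuotient a b δ k (0, x₀) < 1) :
    ∃ X Y : ℝ → ℝ, ContDiffAt ℝ 1 X 0 ∧ ContDiffAt ℝ 1 Y 0 ∧ X 0 = x₀ ∧ Y 0 = x₀ ∧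
      deriv X 0 < 0 ∧ 1 < deriv Y 0 ∧
      ∀ᶠ c in 𝓝 0, TangencySystem (payoffTransform k (leftPayoff a b))
        (payoffTransform k (rightPayoff a b δ c)) (exp (2 * k * X c)) (exp (2 * k * Y c)) := by
  obtain ⟨φ, hφ, hφ0, hφ', hsolves⟩ := exists_zero_curve_contactDefect hδ hx₀ hpos.ne' rfl
  set g := gapQuotient a b δ k (0, x₀)
  have hX' : HasDerivAt (fun c => (φ c).2) ((g - 1) / (2 * g)) 0 := hφ'.snd
  have hT' : HasDerivAt (fun c => (φ c).1) (1 / g) 0 := hφ'.fst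
  refine ⟨fun c => (φ c).2, fun c => (φ c).2 + (φ c).1, hφ.snd, hφ.snd.add hφ.fst, by simp [hφ0],
    by simp [hφ0], ?_, ?_, hsolves.mono fun c hc =>
      tangencySystem_of_contactDefect_eq_zero hδ hk hc.1 hc.2⟩
  · rw [hX'.deriv]
    exact div_neg_of_neg_of_pos (by linarith) (by linarith)
  · have hsum : (g - 1) / (2 * g) + 1 / g = (g + 1) / (2 * g) := by
      field_simp
      ring
    rw [(hX'.fun_add hT').deriv, hsum, lt_div_iff₀ (by linarith)]
    linarith

end Profiles

section SmallParameter

variable {α δ lam f₀ k : ℝ}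

lemma payoffTransform_leftPayoff (hα : 0 < α) (y : ℝ) :
    payoffTransform √(2 * α) (leftPayoff (δ - lam / α) (lam / α ^ 2)) y =
      √y * (-(lam / α ^ 2) + ((δ - lam / α) / (8 * α)) * log y ^ 2) := by
  rw [payoffTransform, leftPayoff, div_pow, mul_pow, sq_sqrt (by positivity)]
  field_simp
  ring

lemma gapQuotient_zero_mem_Ioo (hα : 0 < α) (hδ : 0 < δ) (hltd : lam < α * δ)
    (hcube : α * δ - lam < 4 * δ ^ 3) :
    gapQuotient (δ - lam / α) (lam / α ^ 2) δ √(2 * α) (0, 1 / (2 * δ)) ∈ Ioo 0 1 := by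
  have hvalue : gapQuotient (δ - lam / α) (lam / α ^ 2) δ √(2 * α) (0, 1 / (2 * δ)) =
      1 - (α * δ - lam) / (4 * δ ^ 3) := by
    rw [gapQuotient_zero, leftPayoff, sq_sqrt (by positivity)]
    field_simp
    ring
  have hlt : (α * δ - lam) / (4 * δ ^ 3) < 1 := (div_lt_one (by positivity)).mpr hcube
  have hpos : 0 < (α * δ - lam) / (4 * δ ^ 3) := div_pos (sub_pos.mpr hltd) (by positivity)
  rw [hvalue]
  constructor <;> linarith

lemma sub_mul_threshold_sq_lt (hα : 0 < α) (hlam : 0 < lam) (hltd : lam < α * δ) :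
    (α * δ - lam) * (1 / √(2 * α) * (√((α * δ + lam) / (α * δ - lam)) - 1)) ^ 2 < δ := by
  have hq : 0 < α * δ - lam := sub_pos.mpr hltd
  have hratio : 1 < (α * δ + lam) / (α * δ - lam) := (one_lt_div hq).mpr (by linarith)
  have hroot : 1 < √((α * δ + lam) / (α * δ - lam)) := by
    rwa [lt_sqrt zero_le_one, one_pow]
  have hroot_sq : (α * δ - lam) * √((α * δ + lam) / (α * δ - lam)) ^ 2 = α * δ + lam := by
    rw [sq_sqrt (by linarith), mul_div_cancel₀ _ hq.ne']
  have hsub_sq : (√((α * δ + lam) / (α * δ - lam)) - 1) ^ 2 <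
      √((α * δ + lam) / (α * δ - lam)) ^ 2 :=
    pow_lt_pow_left₀ (by linarith) (by linarith) two_ne_zero
  rw [mul_pow, div_pow, one_pow, sq_sqrt (by positivity), mul_left_comm, one_div,
    inv_mul_lt_iff₀ (by positivity)]
  linarith [mul_lt_mul_of_pos_left hsub_sq hq]

lemma sub_lt_four_mul_cube (hδ : 0 < δ) (hltd : lam < α * δ) (hf₀ : 1 / (2 * δ) < f₀)
    (hf₀_sq : (α * δ - lam) * f₀ ^ 2 < δ) : α * δ - lam < 4 * δ ^ 3 := by
  have hsq : (α * δ - lam) * (1 / (2 * δ)) ^ 2 < δ :=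
    (mul_le_mul_of_nonneg_left (pow_le_pow_left₀ (by positivity) hf₀.le 2)
      (sub_nonneg.mpr hltd.le)).trans_lt hf₀_sq
  field_simp at hsq
  linarith

lemma eventually_unique_root_neg (hδ : 0 < δ) (hltd : lam < α * δ) {xv M : ℝ → ℝ}
    (hxv : ∀ c, 0 < c → xv c < M c ∧
      δ - (α * δ - lam) * xv c ^ 2 + c * α * (δ * (2 * xv c - c) - 1) = 0 ∧
      ∀ x, x < M c →
        δ - (α * δ - lam) * x ^ 2 + c * α * (δ * (2 * x - c) - 1) = 0 → x = xv c) :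
    ∀ᶠ c in 𝓝[>] 0, xv c < 0 := by
  have hcont : ContinuousAt (fun c => δ - c * α * (δ * c + 1)) 0 := by fun_prop
  have hconst : ∀ᶠ c in 𝓝 0, 0 < δ - c * α * (δ * c + 1) :=
    hcont.eventually_const_lt (by simpa using hδ)
  filter_upwards [nhdsWithin_le_nhds hconst, self_mem_nhdsWithin] with c hconst hc
  obtain ⟨hlt, hroot, hunique⟩ := hxv c hc
  refine neg_of_unique_quadratic_root (B := 2 * c * α * δ) (sub_pos.mpr hltd) hconst hlt
    (by linear_combination hroot) fun z hz hz_root => hunique z hz (by linear_combination hz_root)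

lemma eventually_localization {X Y : ℝ → ℝ} {x₀ : ℝ} (hX : DifferentiableAt ℝ X 0)
    (hY : DifferentiableAt ℝ Y 0) (hX0 : X 0 = x₀) (hY0 : Y 0 = x₀) (hX' : deriv X 0 < 0)
    (hY' : 1 < deriv Y 0) (hx₀ : 0 < x₀) (hf₀ : x₀ < f₀) :
    ∀ᶠ c in 𝓝[>] 0, 0 < X c ∧ X c < x₀ + c / 2 ∧ x₀ + c / 2 < Y c ∧ Y c < f₀ + c := by
  filter_upwards [nhdsWithin_le_nhds (hX.continuousAt.eventually_const_lt (hX0.symm ▸ hx₀)),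
    nhdsWithin_le_nhds (hY.continuousAt.eventually_lt_const (hY0.symm ▸ hf₀)),
    eventually_lt_of_deriv_lt (m := 1 / 2) hX.hasDerivAt (by linarith),
    eventually_lt_of_lt_deriv (m := 1 / 2) hY.hasDerivAt (by linarith), self_mem_nhdsWithin]
    with c hXpos hYf hXc hYc hc
  rw [zero_add] at hXc hYc
  have hc : 0 < c := hc
  exact ⟨hXpos, by linarith, by linarith, by linarith⟩

lemma exists_strictAntiOn_strictMonoOn {X Y y₁ y₂ F G : ℝ → ℝ} {c₂ : ℝ} (hk : 0 < k)
    (hc₂ : 0 < c₂) (hX : ContDiffAt ℝ 1 X 0) (hY : ContDiffAt ℝ 1 Y 0) (hX' : deriv X 0 < 0)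
    (hY' : 1 < deriv Y 0)
    (hy : ∀ᶠ c in 𝓝[>] 0, y₁ c = exp (2 * k * X c) ∧ y₂ c = exp (2 * k * Y c))
    (hF : ∀ c, F c = log (y₁ c) / (2 * k)) (hG : ∀ c, G c = log (y₂ c) / (2 * k)) :
    ∃ c₀ : ℝ, 0 < c₀ ∧ c₀ ≤ c₂ ∧
      StrictAntiOn y₁ (Ioo 0 c₀) ∧ StrictMonoOn y₂ (Ioo 0 c₀) ∧
      (∀ c ∈ Ioo (0 : ℝ) c₀, DifferentiableAt ℝ G c ∧ 1 < deriv G c) ∧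
      StrictAntiOn F (Ioo 0 c₀) ∧ StrictMonoOn G (Ioo 0 c₀) := by
  have hcurves : ∀ᶠ c in 𝓝[>] 0, (DifferentiableAt ℝ X c ∧ deriv X c < 0) ∧
      DifferentiableAt ℝ Y c ∧ 1 < deriv Y c :=
    nhdsWithin_le_nhds (((eventually_differentiableAt_of_contDiffAt_one hX).and
      ((continuousAt_deriv_of_contDiffAt_one hX).eventually_lt_const hX')).and
      ((eventually_differentiableAt_of_contDiffAt_one hY).and
        ((continuousAt_deriv_of_contDiffAt_one hY).eventually_const_lt hY')))
  obtain ⟨c₀, ⟨hc₀, hc₀_le⟩, hsub⟩ :=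
    (mem_nhdsGT_iff_exists_mem_Ioc_Ioo_subset hc₂).mp (hcurves.and hy)
  have hFX : EqOn F X (Ioo 0 c₀) := fun c hc => by
    rw [hF, (hsub hc).2.1, log_exp_two_mul_div hk.ne']
  have hGY : EqOn G Y (Ioo 0 c₀) := fun c hc => by
    rw [hG, (hsub hc).2.2, log_exp_two_mul_div hk.ne']
  have hXanti : StrictAntiOn X (Ioo 0 c₀) := strictAntiOn_of_differentiableAt_of_deriv_neg
    (convex_Ioo 0 c₀) (fun c hc => (hsub hc).1.1.1) fun c hc => (hsub hc).1.1.2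
  have hYmono : StrictMonoOn Y (Ioo 0 c₀) := strictMonoOn_of_differentiableAt_of_deriv_pos
    (convex_Ioo 0 c₀) (fun c hc => (hsub hc).1.2.1)
    fun c hc => zero_lt_one.trans (hsub hc).1.2.2
  have hexp : StrictMono fun x => exp (2 * k * x) :=
    exp_strictMono.comp (strictMono_mul_left_of_pos (by positivity))
  refine ⟨c₀, hc₀, hc₀_le, (hexp.comp_strictAntiOn hXanti).congr fun c hc => (hsub hc).2.1.symm,
    (hexp.comp_strictMonoOn hYmono).congr fun c hc => (hsub hc).2.2.symm, fun c hc => ?_,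
    hXanti.congr hFX.symm, hYmono.congr hGY.symm⟩
  have hGY_near : G =ᶠ[𝓝 c] Y := hGY.eventuallyEq_of_mem (Ioo_mem_nhds hc.1 hc.2)
  rw [hGY_near.deriv_eq, hGY_near.differentiableAt_iff]
  exact (hsub hc).1.2

end SmallParameter

theorem stmt_18_general (α δ lam : ℝ) (hα : 0 < α) (hδ : 0 < δ) (hltd : lam < α * δ)
    (hcube : α * δ - lam < 4 * δ ^ 3) (f₀ : ℝ) (hf₀ : 1 / (2 * δ) < f₀)
    (Ψ : ℝ → ℝ) (hΨ : ∀ x, Ψ x = exp (2 * √(2 * α) * x))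
    (Hl : ℝ → ℝ)
    (hHl : ∀ y, 0 < y → Hl y = √y *
      (-(lam / α ^ 2) + ((δ - lam / α) / (8 * α)) * log y ^ 2))
    (hr Hr : ℝ → ℝ → ℝ)
    (hhr : ∀ c x, x ≤ f₀ + c →
      hr c x = δ * c * (c - 2 * x) + (δ - lam / α) * x ^ 2 + c - lam / α ^ 2)
    (hHr : ∀ c y, 0 < y → Hr c y = √y * hr c (log y / (2 * √(2 * α))))
    (xv : ℝ → ℝ)
    (hxv : ∀ c, 0 < c →
      (xv c < f₀ + c ∧
        δ - (α * δ - lam) * (xv c) ^ 2 + c * α * (δ * (2 * xv c - c) - 1) = 0 ∧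
        ∀ x, x < f₀ + c →
          δ - (α * δ - lam) * x ^ 2 + c * α * (δ * (2 * x - c) - 1) = 0 → x = xv c))
    (c₂ : ℝ) (hc₂ : 0 < c₂)
    (yh₁ yh₂ : ℝ → ℝ)
    (huniq : ∀ c, 0 < c → c < c₂ → ∀ y₁ y₂ : ℝ,
      1 < y₁ → y₁ < Ψ (1 / (2 * δ) + c / 2) →
      max (Ψ (1 / (2 * δ) + c / 2)) (Ψ (xv c)) < y₂ → y₂ < Ψ (f₀ + c) →
      TangencySystem Hl (Hr c) y₁ y₂ → y₁ = yh₁ c ∧ y₂ = yh₂ c)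
    (F G : ℝ → ℝ)
    (hF : ∀ c, F c = log (yh₁ c) / (2 * √(2 * α)))
    (hG : ∀ c, G c = log (yh₂ c) / (2 * √(2 * α))) :
    ∃ c₀ : ℝ, 0 < c₀ ∧ c₀ ≤ c₂ ∧
      StrictAntiOn yh₁ (Ioo 0 c₀) ∧ StrictMonoOn yh₂ (Ioo 0 c₀) ∧
      (∀ c ∈ Ioo (0 : ℝ) c₀, DifferentiableAt ℝ G c ∧ 1 < deriv G c) ∧
      StrictAntiOn F (Ioo 0 c₀) ∧ StrictMonoOn G (Ioo 0 c₀) := by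
  have hk : 0 < √(2 * α) := by positivity
  have hx₀ : 0 < 1 / (2 * δ) := by positivity
  have hquot := gapQuotient_zero_mem_Ioo hα hδ hltd hcube
  obtain ⟨X, Y, hX, hY, hX0, hY0, hX', hY', htangent⟩ := exists_tangency_curve hδ.ne' hk.ne'
    (mul_one_div_cancel (by positivity)) hquot.1 hquot.2
  refine exists_strictAntiOn_strictMonoOn hk hc₂ hX hY hX' hY' ?_ hF hG
  filter_upwards [nhdsWithin_le_nhds htangent, eventually_unique_root_neg hδ hltd hxv,
    eventually_localization (hX.differentiableAt one_ne_zero) (hY.differentiableAt one_ne_zero)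
      hX0 hY0 hX' hY' hx₀ hf₀, Ioo_mem_nhdsGT hc₂]
    with c htangent hxv_neg ⟨hXpos, hXlt, hltY, hYlt⟩ hc
  have hΨ_mono : StrictMono Ψ := by
    rw [funext hΨ]
    exact exp_strictMono.comp (strictMono_mul_left_of_pos (by positivity))
  have hpayoff : hr c =ᶠ[𝓝 (Y c)] rightPayoff (δ - lam / α) (lam / α ^ 2) δ c := by
    filter_upwards [eventually_le_nhds hYlt] with x hx
    rw [hhr c x hx, rightPayoff]
    ring
  have hpair := huniq c hc.1 hc.2 (Ψ (X c)) (Ψ (Y c))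
    (by rw [hΨ, one_lt_exp_iff]; positivity) (hΨ_mono hXlt)
    (max_lt (hΨ_mono hltY) (hΨ_mono (by linarith))) (hΨ_mono hYlt)
    (by rw [hΨ, hΨ]; exact .of_payoffTransform hk.ne'
          (fun y hy => (hHl y hy).trans (payoffTransform_leftPayoff hα y).symm) (hHr c) hpayoff
          htangent)
  rw [← hpair.1, ← hpair.2, hΨ, hΨ]
  exact ⟨rfl, rfl⟩

end TangencyPair

/-- there exists c₀ > 0 such that on (0,c₀) the tangency-pair functions are
monotone (ŷ₁ strictly decreasing, ŷ₂ strictly increasing), G is differentiable with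
G' > 1, and the boundaries F and G are respectively strictly decreasing and strictly
increasing. -/
theorem stmt_18 (α δ lam : ℝ) (hα : 0 < α) (hδ : 0 < δ) (hlam : 0 < lam)
    (hltd : lam < α * δ)
    (f₀ : ℝ)
    (hf₀ : f₀ = (1 / Real.sqrt (2 * α)) * (Real.sqrt ((α * δ + lam) / (α * δ - lam)) - 1))
    (hf₀big : α / (2 * lam) < f₀)
    (Ψ : ℝ → ℝ) (hΨ : ∀ x, Ψ x = Real.exp (2 * Real.sqrt (2 * α) * x))
    (Hl : ℝ → ℝ)
    (hHl : ∀ y, 0 < y → Hl y = Real.sqrt y *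
      (-(lam / α ^ 2) + ((δ - lam / α) / (8 * α)) * (Real.log y) ^ 2))
    (B₀ : ℝ)
    (hB₀ : B₀ = -(2 * f₀ / (α * Real.sqrt (2 * α))) * (α * δ - lam) *
      Real.exp (f₀ * Real.sqrt (2 * α)))
    (hr1 hr2 hr Hr : ℝ → ℝ → ℝ)
    (hhr1 : ∀ c x, hr1 c x = δ * c * (c - 2 * x) + (δ - lam / α) * x ^ 2 + c - lam / α ^ 2)
    (hhr2 : ∀ c x, hr2 c x = (lam / α) * c * (c - 2 * x) + c +
      B₀ * Real.exp (-(x - c) * Real.sqrt (2 * α)))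
    (hhra : ∀ c x, x ≤ f₀ + c → hr c x = hr1 c x)
    (hhrb : ∀ c x, f₀ + c ≤ x → hr c x = hr2 c x)
    (hHr : ∀ c y, 0 < y → Hr c y = Real.sqrt y * hr c (Real.log y / (2 * Real.sqrt (2 * α))))
    (xv : ℝ → ℝ)
    (hxv : ∀ c, 0 < c →
      (xv c < f₀ + c ∧
        δ - (α * δ - lam) * (xv c) ^ 2 + c * α * (δ * (2 * xv c - c) - 1) = 0 ∧
        ∀ x, x < f₀ + c →
          δ - (α * δ - lam) * x ^ 2 + c * α * (δ * (2 * x - c) - 1) = 0 → x = xv c))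
    (c₂ : ℝ) (hc₂pos : 0 < c₂)
    (yh₁ yh₂ : ℝ → ℝ)
    (hpair : ∀ c, 0 < c → c < c₂ →
      (1 < yh₁ c ∧ yh₁ c < Ψ (1 / (2 * δ) + c / 2) ∧
        Ψ (1 / (2 * δ) + c / 2) ≤ max (Ψ (1 / (2 * δ) + c / 2)) (Ψ (xv c)) ∧
        max (Ψ (1 / (2 * δ) + c / 2)) (Ψ (xv c)) < yh₂ c ∧ yh₂ c < Ψ (f₀ + c) ∧
        TangencySystem Hl (Hr c) (yh₁ c) (yh₂ c)))
    (huniq : ∀ c, 0 < c → c < c₂ → ∀ y₁ y₂ : ℝ,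
      1 < y₁ → y₁ < Ψ (1 / (2 * δ) + c / 2) →
      Ψ (1 / (2 * δ) + c / 2) ≤ max (Ψ (1 / (2 * δ) + c / 2)) (Ψ (xv c)) →
      max (Ψ (1 / (2 * δ) + c / 2)) (Ψ (xv c)) < y₂ → y₂ < Ψ (f₀ + c) →
      TangencySystem Hl (Hr c) y₁ y₂ → y₁ = yh₁ c ∧ y₂ = yh₂ c)
    (F G : ℝ → ℝ)
    (hF : ∀ c, F c = Real.log (yh₁ c) / (2 * Real.sqrt (2 * α)))
    (hG : ∀ c, G c = Real.log (yh₂ c) / (2 * Real.sqrt (2 * α))) :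
    ∃ c₀ : ℝ, 0 < c₀ ∧ c₀ ≤ c₂ ∧
      StrictAntiOn yh₁ (Set.Ioo 0 c₀) ∧ StrictMonoOn yh₂ (Set.Ioo 0 c₀) ∧
      (∀ c ∈ Set.Ioo (0 : ℝ) c₀, DifferentiableAt ℝ G c ∧ 1 < deriv G c) ∧
      StrictAntiOn F (Set.Ioo 0 c₀) ∧ StrictMonoOn G (Set.Ioo 0 c₀) := by
  have hx₀ : 1 / (2 * δ) < f₀ := by
    refine lt_trans ?_ hf₀big
    rw [div_lt_div_iff₀ (by positivity) (by positivity)]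
    linarith
  exact stmt_18_general α δ lam hα hδ hltd
    (sub_lt_four_mul_cube hδ hltd hx₀ (hf₀ ▸ sub_mul_threshold_sq_lt hα hlam hltd))
    f₀ hx₀ Ψ hΨ Hl hHl hr Hr (fun c x hx => (hhra c x hx).trans (hhr1 c x)) hHr xv hxv c₂ hc₂pos
    yh₁ yh₂ (fun c hc hc' y₁ y₂ h₁ h₁' => huniq c hc hc' y₁ y₂ h₁ h₁' (le_max_left _ _)) F G hF hG
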